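/- Let X be a finite set, c* : X → {0,1} a target classification, and f : X → ℝ^d a feature map that is linearly sufficient for c*. Then there exists a subset T ⊆ X with |T| ≤ d + 1 such that the labeled set {(f(x), c*(x)) : x ∈ T} is linearly separable and every maximum-margin separating hyperplane (w, b) for it satisfies, for all x ∈ X: w·f(x) + b > 0 if c*(x) = 1 and w·f(x) + b < 0 if c*(x) = 0. (The optimal concept specification cost of a linearly sufficient d-dimensional feature set for the maximum-margin linear learner is at most d + 1.) -/

import Mathlib

/-!
Normalise a separating pair so that every point satisfies `1 ≤ s x * (w · f x + b)`, where
`s x = ±1` is the sign of the class of `x` (call such a pair *feasible*). A maximum-margin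
hyperplane is then, up to scale, a feasible pair of least norm `‖w‖`.

If both classes occur, let `(w₀, b₀)` be a feasible pair on all of `X` of least norm `m > 0`; it
exists by compactness (`exists_min_feas`). The half-spaces of `ℝ^d × ℝ` given by the constraints,
together with the convex set `{(w, b) | ‖w‖ < m}`, have empty intersection, so by Helly's theorem
some `d + 2` of them already do. The half-spaces alone meet in `(w₀, b₀)`, so the last set is one of
the `d + 2`, and the others give a set `T` of at most `d + 1` points on which every feasible pair
has norm at least `m` (`exists_small_set`).
The minimiser on `T` is unique (`feas_unique`): `w` is unique by strict convexity of the
norm, and `b` because two values would leave slack in every constraint and permit shrinking `w`.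
Hence a maximum-margin hyperplane for `T` is a multiple of `(w₀, b₀)`, which separates `X`.

If only one class occurs, a single point of `X` has no maximum-margin hyperplane, since shifting `b`
increases the margin without bound.
-/

open scoped Classical

/-- Dot product on `EuclideanSpace ℝ (Fin d)`. -/
noncomputable def dotE {d : ℕ} (w p : EuclideanSpace ℝ (Fin d)) : ℝ := ∑ i, w i * p i

/-- `(w, b)` strictly separates a finite labeled set: positive on the points
labeled `true`, negative on the points labeled `false`. -/
def SepL {d : ℕ} (w : EuclideanSpace ℝ (Fin d)) (b : ℝ)
    (P : Finset (EuclideanSpace ℝ (Fin d) × Bool)) : Prop :=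
  ∀ py ∈ P, (py.2 = true → dotE w py.1 + b > 0) ∧ (py.2 = false → dotE w py.1 + b < 0)

/-- A finite labeled set is linearly separable if some `(w, b)` strictly separates it. -/
def LinSepL {d : ℕ} (P : Finset (EuclideanSpace ℝ (Fin d) × Bool)) : Prop :=
  ∃ (w : EuclideanSpace ℝ (Fin d)) (b : ℝ), SepL w b P

/-- The margin of `(w, b)` on the points of a labeled set. -/
noncomputable def marginL {d : ℕ} (w : EuclideanSpace ℝ (Fin d)) (b : ℝ)
    (P : Finset (EuclideanSpace ℝ (Fin d) × Bool)) : ℝ :=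
  sInf ((fun py : EuclideanSpace ℝ (Fin d) × Bool => |dotE w py.1 + b|) '' (P : Set (EuclideanSpace ℝ (Fin d) × Bool)))

/-- `(w, b)` is a maximum-margin separating hyperplane for the labeled set `P`. -/
def IsMaxMarginL {d : ℕ} (w : EuclideanSpace ℝ (Fin d)) (b : ℝ)
    (P : Finset (EuclideanSpace ℝ (Fin d) × Bool)) : Prop :=
  ‖w‖ = 1 ∧ SepL w b P ∧
    ∀ (w' : EuclideanSpace ℝ (Fin d)) (b' : ℝ), ‖w'‖ = 1 → SepL w' b' P →
      marginL w' b' P ≤ marginL w b P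

lemma dotE_eq_inner {d : ℕ} (w p : EuclideanSpace ℝ (Fin d)) : dotE w p = inner ℝ p w := by
  simp [dotE, PiLp.inner_apply]

lemma dotE_smul {d : ℕ} (a : ℝ) (w p : EuclideanSpace ℝ (Fin d)) :
    dotE (a • w) p = a * dotE w p := by
  simp [dotE_eq_inner, inner_smul_right]

lemma dotE_add {d : ℕ} (w v p : EuclideanSpace ℝ (Fin d)) :
    dotE (w + v) p = dotE w p + dotE v p := by
  simp [dotE_eq_inner, inner_add_right]

/-- The sign `±1` of a label. -/
noncomputable def sgnL (y : Bool) : ℝ := if y = true then 1 else -1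

lemma abs_sgnL_mul (y : Bool) (t : ℝ) : |sgnL y * t| = |t| := by
  cases y <;> simp [sgnL]

lemma sgnL_mul_pos_iff (y : Bool) (t : ℝ) :
    0 < sgnL y * t ↔ (y = true → t > 0) ∧ (y = false → t < 0) := by
  cases y <;> simp [sgnL]

/-- `(w, b)` classifies every point of `T` correctly with functional margin at least one. -/
def Feas {X : Type*} {d : ℕ} (c : X → Bool) (f : X → EuclideanSpace ℝ (Fin d)) (T : Finset X)
    (w : EuclideanSpace ℝ (Fin d)) (b : ℝ) : Prop :=
  ∀ x ∈ T, 1 ≤ sgnL (c x) * (dotE w (f x) + b)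

lemma sepL_iff {X : Type*} {d : ℕ} (c : X → Bool) (f : X → EuclideanSpace ℝ (Fin d))
    (T : Finset X) (w : EuclideanSpace ℝ (Fin d)) (b : ℝ) :
    SepL w b (T.image fun x => (f x, c x)) ↔ ∀ x ∈ T, 0 < sgnL (c x) * (dotE w (f x) + b) := by
  simp only [SepL, Finset.forall_mem_image, sgnL_mul_pos_iff]

lemma marginL_le {d : ℕ} {w : EuclideanSpace ℝ (Fin d)} {b : ℝ}
    {P : Finset (EuclideanSpace ℝ (Fin d) × Bool)} {py : EuclideanSpace ℝ (Fin d) × Bool}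
    (h : py ∈ P) : marginL w b P ≤ |dotE w py.1 + b| :=
  csInf_le ⟨0, by rintro _ ⟨_, _, rfl⟩; exact abs_nonneg _⟩ ⟨py, h, rfl⟩

lemma le_marginL {d : ℕ} {w : EuclideanSpace ℝ (Fin d)} {b r : ℝ}
    {P : Finset (EuclideanSpace ℝ (Fin d) × Bool)} (hP : P.Nonempty)
    (h : ∀ py ∈ P, r ≤ |dotE w py.1 + b|) : r ≤ marginL w b P :=
  le_csInf (by obtain ⟨p, hp⟩ := hP; exact ⟨_, p, hp, rfl⟩)
    (by rintro _ ⟨p, hp, rfl⟩; exact h p hp)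

/-- Some feasible pair on a labeled set meeting both classes has least `‖w‖`: on a bounded set of
`w`, one point of each class confines `b` to a bounded interval. -/
lemma exists_min_feas {X : Type*} {d : ℕ} (c : X → Bool) (f : X → EuclideanSpace ℝ (Fin d))
    (S : Finset X) {x y : X} (hx : x ∈ S) (hy : y ∈ S) (hcx : c x = true) (hcy : c y = false)
    (hne : ∃ w b, Feas c f S w b) :
    ∃ w b, Feas c f S w b ∧ ∀ w' b', Feas c f S w' b' → ‖w‖ ≤ ‖w'‖ := by
  obtain ⟨w₁, b₁, h₁⟩ := hne
  let K : Set (EuclideanSpace ℝ (Fin d) × ℝ) := {z | Feas c f S z.1 z.2 ∧ ‖z.1‖ ≤ ‖w₁‖}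
  have hclosed : IsClosed K := by
    have : K = (⋂ x ∈ S, {z : EuclideanSpace ℝ (Fin d) × ℝ |
        1 ≤ sgnL (c x) * (dotE z.1 (f x) + z.2)}) ∩ {z | ‖z.1‖ ≤ ‖w₁‖} := by
      ext z; simp [K, Feas]
    rw [this]
    refine IsClosed.inter (isClosed_biInter fun x _ => isClosed_le continuous_const ?_)
      (isClosed_le (by fun_prop) continuous_const)
    simp only [dotE_eq_inner]
    fun_prop
  have hsub : K ⊆ Metric.closedBall (0 : EuclideanSpace ℝ (Fin d)) ‖w₁‖ ×ˢ
      Set.Icc (-(‖f x‖ * ‖w₁‖)) (‖f y‖ * ‖w₁‖) := by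
    rintro ⟨w, b⟩ ⟨hF, hw⟩
    have e1 := hF x hx
    have e2 := hF y hy
    simp only [hcx, hcy, sgnL, dotE_eq_inner] at e1 e2 hw
    simp at e1 e2
    have i1 := abs_le.1 (abs_real_inner_le_norm (f x) w)
    have i2 := abs_le.1 (abs_real_inner_le_norm (f y) w)
    have j1 := mul_le_mul_of_nonneg_left hw (norm_nonneg (f x))
    have j2 := mul_le_mul_of_nonneg_left hw (norm_nonneg (f y))
    refine ⟨by simpa using hw, ?_, ?_⟩ <;> dsimp only <;> linarith
  have hK : IsCompact K :=
    ((isCompact_closedBall _ _).prod isCompact_Icc).of_isClosed_subset hclosed hsub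
  obtain ⟨z, hz, hmin⟩ := hK.exists_isMinOn (f := fun z => ‖z.1‖) ⟨(w₁, b₁), h₁, le_rfl⟩
    (by fun_prop)
  refine ⟨z.1, z.2, hz.1, fun w' b' h' => ?_⟩
  by_cases hw : ‖w'‖ ≤ ‖w₁‖
  · exact isMinOn_iff.1 hmin (w', b') ⟨h', hw⟩
  · exact hz.2.trans (not_le.1 hw).le

/-- Helly's theorem in `ℝ^d × ℝ`, applied to the constraints and to `{(w, b) | ‖w‖ < m}`: a lower
bound for the norm of feasible pairs is already forced by at most `d + 1` constraints. -/
lemma exists_small_set {X : Type*} {d : ℕ} (c : X → Bool) (f : X → EuclideanSpace ℝ (Fin d))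
    (S : Finset X) (hne : ∃ w b, Feas c f S w b) {m : ℝ}
    (hm : ∀ w b, Feas c f S w b → m ≤ ‖w‖) :
    ∃ T ⊆ S, T.card ≤ d + 1 ∧ ∀ w b, Feas c f T w b → m ≤ ‖w‖ := by
  obtain ⟨w₀, b₀, h₀⟩ := hne
  by_contra! hcon
  let F : Option X → Set (EuclideanSpace ℝ (Fin d) × ℝ) := fun o =>
    o.elim {z | ‖z.1‖ < m} fun x => {z | 1 ≤ sgnL (c x) * (dotE z.1 (f x) + z.2)}
  have hconv : ∀ o ∈ Finset.insertNone S, Convex ℝ (F o) := by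
    rintro (_ | x) -
    · have h : F none = LinearMap.fst ℝ (EuclideanSpace ℝ (Fin d)) ℝ ⁻¹' Metric.ball 0 m := by
        ext z; simp [F]
      rw [h]
      exact (convex_ball _ _).linear_preimage _
    · rintro ⟨w, b⟩ h ⟨w', b'⟩ h' s t hs ht hst
      simp only [F, Option.elim_some, Set.mem_ofPred_eq, Prod.smul_mk, Prod.mk_add_mk, dotE_add,
        dotE_smul, smul_eq_mul] at h h' ⊢
      have e := mul_le_mul_of_nonneg_left h hs
      have e' := mul_le_mul_of_nonneg_left h' ht
      linarith
  obtain ⟨z, hz⟩ := Convex.helly_theorem' (𝕜 := ℝ) hconv (by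
    intro I hI hcard
    have hIS : Finset.eraseNone I ⊆ S := fun x hx => by
      simpa using hI (Finset.mem_eraseNone.1 hx)
    by_cases hn : none ∈ I
    · have hc : (Finset.eraseNone I).card ≤ d + 1 := by
        have h1 : (Finset.insertNone (Finset.eraseNone I)).card = I.card := by
          rw [Finset.insertNone_eraseNone, Finset.insert_eq_self.2 hn]
        rw [Finset.card_insertNone] at h1
        simp at hcard
        omega
      obtain ⟨w, b, hF, hw⟩ := hcon _ hIS hc
      refine ⟨(w, b), Set.mem_iInter₂.2 ?_⟩
      rintro (_ | x) hx
      · exact hw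
      · exact hF x (Finset.mem_eraseNone.2 hx)
    · refine ⟨(w₀, b₀), Set.mem_iInter₂.2 ?_⟩
      rintro (_ | x) hx
      · exact absurd hx hn
      · exact h₀ x (hIS (Finset.mem_eraseNone.2 hx)))
  have hz' := Set.mem_iInter₂.1 hz
  have h1 : ‖z.1‖ < m := hz' none (by simp)
  exact absurd (hm z.1 z.2 fun x hx => hz' (some x) (by simpa using hx)) (not_le.2 h1)

/-- The feasible pair of least positive norm is unique. -/
lemma feas_unique {X : Type*} {d : ℕ} (c : X → Bool) (f : X → EuclideanSpace ℝ (Fin d))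
    (T : Finset X) {m : ℝ} (hm0 : 0 < m) (hm : ∀ w b, Feas c f T w b → m ≤ ‖w‖)
    {w w' : EuclideanSpace ℝ (Fin d)} {b b' : ℝ} (h : Feas c f T w b) (h' : Feas c f T w' b')
    (hw : ‖w‖ ≤ m) (hw' : ‖w'‖ ≤ m) : w = w' ∧ b = b' := by
  have hww : w = w' := by
    by_contra hne
    have hlt := norm_combo_lt_of_ne hw hw' hne (a := 1 / 2) (b := 1 / 2) (by norm_num)
      (by norm_num) (by norm_num)
    refine absurd (hm _ ((1 / 2) * b + (1 / 2) * b') fun x hx => ?_) (not_le.2 hlt)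
    have e := h x hx
    have e' := h' x hx
    rw [dotE_add, dotE_smul, dotE_smul]
    linarith
  subst hww
  refine ⟨rfl, ?_⟩
  by_contra hne
  -- At the midpoint of `b` and `b'` every constraint has slack `δ`.
  set δ : ℝ := |b - b'| / 2 with hδ
  have hδ0 : 0 < δ := half_pos (abs_pos.2 (sub_ne_zero.2 hne))
  have hF : Feas c f T ((1 + δ)⁻¹ • w) ((1 + δ)⁻¹ * ((b + b') / 2)) := by
    intro x hx
    have e := h x hx
    have e' := h' x hx
    have key : 1 + δ ≤ sgnL (c x) * (dotE w (f x) + (b + b') / 2) := by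
      rcases hc : c x <;> simp only [hc, sgnL] at e e' ⊢ <;> simp at e e' ⊢ <;>
        rcases abs_cases (b - b') with ⟨ha, _⟩ | ⟨ha, _⟩ <;> rw [hδ, ha] <;> linarith
    rw [dotE_smul]
    have : sgnL (c x) * ((1 + δ)⁻¹ * dotE w (f x) + (1 + δ)⁻¹ * ((b + b') / 2)) =
      (1 + δ)⁻¹ * (sgnL (c x) * (dotE w (f x) + (b + b') / 2)) := by ring
    rw [this, inv_mul_eq_div, le_div_iff₀ (by positivity)]
    linarith
  have h2 := hm _ _ hF
  rw [norm_smul, Real.norm_of_nonneg (by positivity), inv_mul_eq_div,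
    le_div_iff₀ (by positivity)] at h2
  nlinarith

/-- A single labeled point has no maximum-margin hyperplane: shifting `b` increases the margin. -/
lemma not_isMaxMarginL_singleton {X : Type*} {d : ℕ} (c : X → Bool)
    (f : X → EuclideanSpace ℝ (Fin d)) (x : X) (w : EuclideanSpace ℝ (Fin d)) (b : ℝ) :
    ¬ IsMaxMarginL w b (({x} : Finset X).image fun x => (f x, c x)) := by
  rintro ⟨hw, hs, hmax⟩
  rw [sepL_iff] at hs
  have hx := hs x (by simp)
  have e : sgnL (c x) * (dotE w (f x) + (b + sgnL (c x))) =
      sgnL (c x) * (dotE w (f x) + b) + 1 := by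
    cases c x <;> simp [sgnL] <;> ring
  have h := hmax w (b + sgnL (c x)) hw ((sepL_iff ..).2 (by
    intro y hy
    obtain rfl := Finset.mem_singleton.1 hy
    rw [e]; linarith))
  have h1 : marginL w b (({x} : Finset X).image fun x => (f x, c x)) ≤ |dotE w (f x) + b| :=
    marginL_le (py := (f x, c x)) (by simp)
  have h2 : |dotE w (f x) + b| + 1 ≤
      marginL w (b + sgnL (c x)) (({x} : Finset X).image fun x => (f x, c x)) := by
    refine le_marginL (by simp) ?_
    simp only [Finset.forall_mem_image, Finset.mem_singleton]
    rintro y rfl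
    rw [← abs_sgnL_mul (c y), ← abs_sgnL_mul (c y) (dotE w (f y) + (b + sgnL (c y))), e,
      abs_of_pos hx, abs_of_pos (by linarith)]
  linarith

lemma exists_feas {X : Type*} {d : ℕ} (c : X → Bool) (f : X → EuclideanSpace ℝ (Fin d))
    (S : Finset X) (hS : S.Nonempty)
    (h : ∃ w b, ∀ x ∈ S, 0 < sgnL (c x) * (dotE w (f x) + b)) : ∃ w b, Feas c f S w b := by
  obtain ⟨w, b, h⟩ := h
  obtain ⟨x₀, hx₀, hmin⟩ := S.exists_min_image (fun x => sgnL (c x) * (dotE w (f x) + b)) hS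
  set r := sgnL (c x₀) * (dotE w (f x₀) + b)
  have hr : 0 < r := h x₀ hx₀
  refine ⟨r⁻¹ • w, r⁻¹ * b, fun x hx => ?_⟩
  rw [dotE_smul, show sgnL (c x) * (r⁻¹ * dotE w (f x) + r⁻¹ * b) =
    (sgnL (c x) * (dotE w (f x) + b)) / r by ring, le_div_iff₀ hr, one_mul]
  exact hmin x hx

/-- The optimal concept specification cost of a linearly sufficient `d`-dimensional
feature set for the maximum-margin linear learner is at most `d + 1`. -/
theorem stmt7 {X : Type*} [Fintype X] {d : ℕ} (c : X → Bool)
    (f : X → EuclideanSpace ℝ (Fin d))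
    (hsuff : ∃ (w : EuclideanSpace ℝ (Fin d)) (b : ℝ), ∀ x : X,
      (c x = true → dotE w (f x) + b > 0) ∧ (c x = false → dotE w (f x) + b < 0)) :
    ∃ T : Finset X, T.card ≤ d + 1 ∧
      LinSepL (T.image fun x => (f x, c x)) ∧
      ∀ (w : EuclideanSpace ℝ (Fin d)) (b : ℝ),
        IsMaxMarginL w b (T.image fun x => (f x, c x)) →
        ∀ x : X, (c x = true → dotE w (f x) + b > 0) ∧
          (c x = false → dotE w (f x) + b < 0) := by
  simp only [← sgnL_mul_pos_iff] at hsuff ⊢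
  have hsep : ∀ T : Finset X, LinSepL (T.image fun x => (f x, c x)) := fun T => by
    obtain ⟨w, b, h⟩ := hsuff
    exact ⟨w, b, (sepL_iff ..).2 fun x _ => h x⟩
  rcases isEmpty_or_nonempty X with hX | ⟨⟨x₀⟩⟩
  · exact ⟨∅, by simp, hsep _, fun _ _ _ x => hX.elim x⟩
  by_cases hcl : (∃ x, c x = true) ∧ ∃ y, c y = false
  swap
  · exact ⟨{x₀}, by simp, hsep _, fun w b h => (not_isMaxMarginL_singleton c f x₀ w b h).elim⟩
  obtain ⟨⟨x, hx⟩, y, hy⟩ := hcl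
  have hne : ∃ w b, Feas c f Finset.univ w b :=
    exists_feas c f _ ⟨x₀, Finset.mem_univ _⟩ (by simpa using hsuff)
  obtain ⟨w₀, b₀, h₀, hmin⟩ := exists_min_feas c f Finset.univ (Finset.mem_univ x)
    (Finset.mem_univ y) hx hy hne
  have hw₀ : 0 < ‖w₀‖ := by
    rw [norm_pos_iff]
    rintro rfl
    have e1 := h₀ x (Finset.mem_univ x)
    have e2 := h₀ y (Finset.mem_univ y)
    simp [hx, hy, sgnL, dotE] at e1 e2
    linarith
  obtain ⟨T, -, hcard, hT⟩ := exists_small_set c f Finset.univ hne hmin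
  have h₀T : Feas c f T w₀ b₀ := fun x _ => h₀ x (Finset.mem_univ x)
  have hTne : T.Nonempty := by
    rw [Finset.nonempty_iff_ne_empty]
    rintro rfl
    have := hT 0 0 (by simp [Feas])
    simp only [norm_zero] at this
    linarith
  refine ⟨T, hcard, hsep T, fun w b ⟨hw, hs, hmax⟩ z => ?_⟩
  rw [sepL_iff] at hs
  -- The normalised minimiser has margin at least `‖w₀‖⁻¹` on `T`.
  have hscale : ∀ x ∈ T, ‖w₀‖⁻¹ ≤
      sgnL (c x) * (dotE (‖w₀‖⁻¹ • w₀) (f x) + ‖w₀‖⁻¹ * b₀) := fun x hx => by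
    rw [dotE_smul, show sgnL (c x) * (‖w₀‖⁻¹ * dotE w₀ (f x) + ‖w₀‖⁻¹ * b₀) =
      ‖w₀‖⁻¹ * (sgnL (c x) * (dotE w₀ (f x) + b₀)) by ring]
    exact le_mul_of_one_le_right (by positivity) (h₀T x hx)
  have hinv : 0 < ‖w₀‖⁻¹ := by positivity
  have hle : ‖w₀‖⁻¹ ≤ marginL w b (T.image fun x => (f x, c x)) := by
    refine le_trans (le_marginL (hTne.image _) ?_) (hmax (‖w₀‖⁻¹ • w₀) (‖w₀‖⁻¹ * b₀) ?_ ?_)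
    · simp only [Finset.forall_mem_image]
      intro x hx
      rw [← abs_sgnL_mul (c x)]
      exact (hscale x hx).trans (le_abs_self _)
    · rw [norm_smul, norm_inv, norm_norm, inv_mul_cancel₀ hw₀.ne']
    · exact (sepL_iff ..).2 fun x hx => hinv.trans_le (hscale x hx)
  have hF : Feas c f T (‖w₀‖ • w) (‖w₀‖ * b) := fun x hx => by
    have h1 : ‖w₀‖⁻¹ ≤ |dotE w (f x) + b| :=
      hle.trans (marginL_le (py := (f x, c x)) (Finset.mem_image_of_mem _ hx))
    rw [← abs_sgnL_mul (c x), abs_of_pos (hs x hx)] at h1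
    have h2 := mul_le_mul_of_nonneg_left h1 hw₀.le
    rw [mul_inv_cancel₀ hw₀.ne'] at h2
    rw [dotE_smul]
    linarith
  obtain ⟨e1, e2⟩ := feas_unique c f T hw₀ hT hF h₀T (by simp [norm_smul, hw]) le_rfl
  have h3 := h₀ z (Finset.mem_univ z)
  rw [← e1, ← e2, dotE_smul, show sgnL (c z) * (‖w₀‖ * dotE w (f z) + ‖w₀‖ * b) =
    ‖w₀‖ * (sgnL (c z) * (dotE w (f z) + b)) by ring] at h3
  exact pos_of_mul_pos_right (by linarith) hw₀.le
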